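/- Let 0<α<mn, 0<δ<(mn−α)/m, α̃=α+mδ, and let p⃗ be a vector of exponents with p>n/α̃. Let δ̃ ≤ δ and let (w,v⃗) be a pair of weights in the class H_m(p⃗, α̃, δ̃) (for some fixed splitting α̃ = Σ α̃_i with 0<α̃_i<n), such that v_i^{−p_i'} ∈ RH_m for every i with 1<p_i≤∞. Then there is a constant C>0 such that for every ball B and every f⃗=(f_1,…,f_m) with f_i v_i ∈ L^{p_i}(ℝ^n) for each i, one has ∫_B |I_{α̃,m} g⃗(x)| dx ≤ C (|B|^{1+δ̃/n} / ‖w χ_B‖_∞) ∏_{i=1}^m ‖f_i v_i‖_{L^{p_i}}, where g⃗ = (f_1 χ_{2B}, …, f_m χ_{2B}) and 2B is the ball concentric with B of twice the radius. -/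

import Mathlib

/-!
Write `a = α + mδ`, `B = B(c, R)`, and `1/p_i' = 1 - 1/p_i`. The assumption `p > n/a` says exactly
that `∑ 1/p_i' > (mn - a)/n`, so `θ = ((mn - a)/n) / ∑ 1/p_i'` lies in `(0, 1)` and the homogeneity
of the kernel splits as `mn - a = ∑ θn/p_i'`. Since `|x - y_i| ≤ ∑_j |x - y_j|`, the multilinear
integral is pointwise at most `∏_i J_i(x)`, where
`J_i(x) = ∫_{2B} |f_i(y)| |x - y|^{-θn/p_i'} dy` (`Ifrac_le_prod`).

Hölder's inequality in `x` with `m` equal exponents reduces the claim to bounding each `J_i` in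
`L^m(B)` (`factor_bound`). When `p_i > 1`, Hölder's inequality in `y` gives
`J_i ≤ ‖f_i v_i‖_{p_i} (|·|^{-θn} * σ_i χ_{2B})^{1/p_i'}` with `σ_i = v_i^{-p_i'}`. Because `θ < 1`,
the kernel `|·|^{-θn}` has mass `≲ |B|^{1-θ}` at scale `R`, so Schur's test bounds the `L^m(B)` norm
of the convolution by `|B|^{1-θ} ‖σ_i χ_{2B}‖_m`, and `σ_i ∈ RH_m` turns this into
`|B|^{1/m-θ} ∫_{2B} σ_i`. When `p_i = 1` the kernel in the `i`-th variable is constant and nothing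
is needed beyond `‖v_i⁻¹‖_{L^∞(2B)}`. Altogether
`∫_B I ≲ |B|^{1-(mn-a)/n} ∏ ‖f_i v_i‖_{p_i} ‖v_i⁻¹ χ_{2B}‖_{p_i'}`.

Finally `|B|^{1/n} + |c - y|` is comparable to `|B|^{1/n}` on `2B`, so the `H_m` condition restricted
to `2B` reads `‖w χ_B‖_∞ ∏ ‖v_i⁻¹ χ_{2B}‖_{p_i'} ≲ |B|^{(mn-a+δ̃)/n}` (`local_le_HmFactor`), and the
two powers of `|B|` multiply to `|B|^{1+δ̃/n}`.
-/

open MeasureTheory Metric Set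
open scoped ENNReal NNReal BigOperators
open scoped Classical

noncomputable section

/-- Euclidean space `ℝⁿ`. -/
abbrev Rn (n : ℕ) : Type := EuclideanSpace ℝ (Fin n)

/-- The `q`-"norm" of a nonnegative function with respect to the measure `μ`,
for `q ∈ [1,∞]`; `q = ∞` gives the essential supremum. -/
noncomputable def LpNormE {α : Type*} [MeasurableSpace α] (μ : Measure α)
    (g : α → ℝ≥0∞) (q : ℝ≥0∞) : ℝ≥0∞ :=
  if q = ∞ then essSup g μ else (∫⁻ x, g x ^ q.toReal ∂μ) ^ (1 / q.toReal)

/-- Conjugate exponent in `[1,∞]`. -/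
noncomputable def conjE (q : ℝ≥0∞) : ℝ≥0∞ :=
  if q = 1 then ∞ else if q = ∞ then 1 else ENNReal.ofReal (q.toReal / (q.toReal - 1))

/-- Real-valued conjugate exponent of `q ∈ (1,∞]`. -/
noncomputable def conjR (q : ℝ≥0∞) : ℝ :=
  if q = ∞ then 1 else q.toReal / (q.toReal - 1)

/-- A weight: measurable, a.e. positive and finite, and locally integrable. -/
def IsWeight (n : ℕ) (u : Rn n → ℝ≥0∞) : Prop :=
  Measurable u ∧ (∀ᵐ x ∂(volume : Measure (Rn n)), 0 < u x ∧ u x < ∞) ∧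
    ∀ (c : Rn n) (R : ℝ), 0 < R → ∫⁻ x in ball c R, u x < ∞

/-- The `i`-th factor in the `H_m(p,β,δ̃)` condition over the ball `B(c,R)`
(`δ` is the fixed ambient parameter, `β i` the splitting of `β`). For `p i = 1`
the conjugate exponent is `∞` and the factor is an essential supremum. -/
noncomputable def HmFactor (n m : ℕ) (δ : ℝ) (β : Fin m → ℝ) (p : Fin m → ℝ≥0∞)
    (v : Fin m → Rn n → ℝ≥0∞) (c : Rn n) (R : ℝ) (i : Fin m) : ℝ≥0∞ :=
  LpNormE volume
    (fun y => (v i y)⁻¹ *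
      (volume (ball c R) ^ (n : ℝ)⁻¹ + edist c y) ^ (-((n : ℝ) - β i + δ / (m : ℝ))))
    (conjE (p i))

/-- The left-hand side of the `H_m(p,β,δ̃)` condition over the ball `B(c,R)`. -/
noncomputable def HmLHS (n m : ℕ) (δ δt : ℝ) (β : Fin m → ℝ) (p : Fin m → ℝ≥0∞)
    (w : Rn n → ℝ≥0∞) (v : Fin m → Rn n → ℝ≥0∞) (c : Rn n) (R : ℝ) : ℝ≥0∞ :=
  essSup w (volume.restrict (ball c R)) / volume (ball c R) ^ ((δt - δ) / (n : ℝ)) *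
    ∏ i, HmFactor n m δ β p v c R i

/-- The class `H_m(p,β,δ̃)`, with fixed ambient parameter `δ` and splitting `β i`. -/
def MemHm (n m : ℕ) (δ δt : ℝ) (β : Fin m → ℝ) (p : Fin m → ℝ≥0∞)
    (w : Rn n → ℝ≥0∞) (v : Fin m → Rn n → ℝ≥0∞) : Prop :=
  ∃ C : ℝ≥0∞, C ≠ ∞ ∧ ∀ (c : Rn n) (R : ℝ), 0 < R → HmLHS n m δ δt β p w v c R ≤ C

/-- The reverse Hölder class `RH_s`. -/
def MemRH (n : ℕ) (s : ℝ) (u : Rn n → ℝ≥0∞) : Prop :=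
  ∃ C : ℝ≥0∞, C ≠ ∞ ∧ ∀ (c : Rn n) (R : ℝ), 0 < R →
    ((volume (ball c R))⁻¹ * ∫⁻ x in ball c R, u x ^ s) ^ s⁻¹ ≤
      C * ((volume (ball c R))⁻¹ * ∫⁻ x in ball c R, u x)

/-- The reverse Hölder class `RH_∞`. -/
def MemRHinf (n : ℕ) (u : Rn n → ℝ≥0∞) : Prop :=
  ∃ C : ℝ≥0∞, C ≠ ∞ ∧ ∀ (c : Rn n) (R : ℝ), 0 < R →
    essSup u (volume.restrict (ball c R)) ≤
      C * ((volume (ball c R))⁻¹ * ∫⁻ x in ball c R, u x)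

/-- The Muckenhoupt class `A_1`. -/
def MemA1 (n : ℕ) (u : Rn n → ℝ≥0∞) : Prop :=
  ∃ C : ℝ≥0∞, C ≠ ∞ ∧ ∀ (c : Rn n) (R : ℝ), 0 < R →
    (volume (ball c R))⁻¹ * ∫⁻ x in ball c R, u x ≤
      C * essInf u (volume.restrict (ball c R))

/-- A doubling function: the integral over `2B` is controlled by the one over `B`. -/
def Doubling (n : ℕ) (u : Rn n → ℝ≥0∞) : Prop :=
  ∃ C : ℝ≥0∞, C ≠ ∞ ∧ ∀ (c : Rn n) (R : ℝ), 0 < R →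
    ∫⁻ x in ball c (2 * R), u x ≤ C * ∫⁻ x in ball c R, u x

/-- The `i`-th factor in the global condition over the ball `B(c,R)`. -/
noncomputable def GlobalFactor (n m : ℕ) (δ : ℝ) (β : Fin m → ℝ) (p : Fin m → ℝ≥0∞)
    (v : Fin m → Rn n → ℝ≥0∞) (c : Rn n) (R : ℝ) (i : Fin m) : ℝ≥0∞ :=
  LpNormE (volume.restrict (ball c R)ᶜ)
    (fun y => (v i y)⁻¹ * edist c y ^ (-((n : ℝ) - β i + δ / (m : ℝ)))) (conjE (p i))

/-- The global condition associated with the class `H_m(p,β,δ̃)`. -/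
def GlobalCond (n m : ℕ) (δ δt : ℝ) (β : Fin m → ℝ) (p : Fin m → ℝ≥0∞)
    (w : Rn n → ℝ≥0∞) (v : Fin m → Rn n → ℝ≥0∞) : Prop :=
  ∃ C : ℝ≥0∞, C ≠ ∞ ∧ ∀ (c : Rn n) (R : ℝ), 0 < R →
    essSup w (volume.restrict (ball c R)) / volume (ball c R) ^ ((δt - δ) / (n : ℝ)) *
      ∏ i, GlobalFactor n m δ β p v c R i ≤ C

/-- The local condition associated with the class `H_m(p,β,δ̃)`; here `β` is the
total (scalar) parameter. -/
def LocalCond (n m : ℕ) (δt β : ℝ) (p : Fin m → ℝ≥0∞)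
    (w : Rn n → ℝ≥0∞) (v : Fin m → Rn n → ℝ≥0∞) : Prop :=
  ∃ C : ℝ≥0∞, C ≠ ∞ ∧ ∀ (c : Rn n) (R : ℝ), 0 < R →
    essSup w (volume.restrict (ball c R)) /
        volume (ball c R) ^ (δt / (n : ℝ) + (∑ i, (p i)⁻¹).toReal - β / (n : ℝ)) *
      ∏ i, (if p i = 1 then essSup (fun x => (v i x)⁻¹) (volume.restrict (ball c R))
        else ((volume (ball c R))⁻¹ * ∫⁻ x in ball c R, (v i x)⁻¹ ^ conjR (p i)) ^
          (conjR (p i))⁻¹) ≤ C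

/-- The multilinear class `A_{p⃗,∞}`. -/
def MemApInf (n m : ℕ) (p : Fin m → ℝ≥0∞) (v : Fin m → Rn n → ℝ≥0∞) : Prop :=
  ∃ C : ℝ≥0∞, C ≠ ∞ ∧ ∀ (c : Rn n) (R : ℝ), 0 < R →
    essSup (fun x => ∏ i, v i x) (volume.restrict (ball c R)) *
      ∏ i, (if p i = 1 then essSup (fun x => (v i x)⁻¹) (volume.restrict (ball c R))
        else ((volume (ball c R))⁻¹ * ∫⁻ x in ball c R, (v i x)⁻¹ ^ conjR (p i)) ^
          (conjR (p i))⁻¹) ≤ C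

/-- The multilinear class `A_{p⃗,q}` for `0 < q < ∞`. -/
def MemApq (n m : ℕ) (p : Fin m → ℝ≥0∞) (q : ℝ) (w : Fin m → Rn n → ℝ≥0∞) : Prop :=
  ∃ C : ℝ≥0∞, C ≠ ∞ ∧ ∀ (c : Rn n) (R : ℝ), 0 < R →
    ((volume (ball c R))⁻¹ * ∫⁻ x in ball c R, ∏ i, w i x ^ q) ^ (1 / q) *
      ∏ i, (if p i = 1 then essSup (fun x => (w i x)⁻¹) (volume.restrict (ball c R))
        else ((volume (ball c R))⁻¹ * ∫⁻ x in ball c R, (w i x)⁻¹ ^ conjR (p i)) ^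
          (conjR (p i))⁻¹) ≤ C

/-- The multilinear Muckenhoupt class `A_{r⃗}`. -/
def MemAvec (n m : ℕ) (r : Fin m → ℝ≥0∞) (u : Fin m → Rn n → ℝ≥0∞) : Prop :=
  ∃ C : ℝ≥0∞, C ≠ ∞ ∧ ∀ (c : Rn n) (R : ℝ), 0 < R →
    ((volume (ball c R))⁻¹ *
        ∫⁻ x in ball c R, ∏ i, u i x ^ ((∑ j, (r j)⁻¹).toReal⁻¹ * ((r i)⁻¹).toReal)) ^
        (∑ j, (r j)⁻¹).toReal *
      ∏ i, (if r i = 1 then essSup (fun x => (u i x)⁻¹) (volume.restrict (ball c R))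
        else ((volume (ball c R))⁻¹ * ∫⁻ x in ball c R, u i x ^ (1 - conjR (r i))) ^
          (conjR (r i))⁻¹) ≤ C

/-- Product Lebesgue measure on `(ℝⁿ)^m`. -/
noncomputable def pim (n m : ℕ) : Measure (Fin m → Rn n) :=
  Measure.pi fun _ => (volume : Measure (Rn n))

/-- Size condition for a multilinear fractional kernel of order `α`. -/
def SizeCond (n m : ℕ) (α : ℝ) (K : Rn n → (Fin m → Rn n) → ℝ) : Prop :=
  ∃ C : ℝ, 0 < C ∧ ∀ (x : Rn n) (y : Fin m → Rn n), (∑ i, dist x (y i)) ≠ 0 →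
    |K x y| ≤ C * (∑ i, dist x (y i)) ^ (α - (m : ℝ) * (n : ℝ))

/-- Smoothness condition with exponent `γ` for a multilinear fractional kernel. -/
def SmoothCond (n m : ℕ) (α γ : ℝ) (K : Rn n → (Fin m → Rn n) → ℝ) : Prop :=
  ∃ C : ℝ, 0 < C ∧ ∀ (x x' : Rn n) (y : Fin m → Rn n),
    2 * dist x x' < ∑ i, dist x (y i) →
    |K x y - K x' y| ≤ C * dist x x' ^ γ * (∑ i, dist x (y i)) ^ (α - (m : ℝ) * (n : ℝ) - γ)

/-- The Lipschitz space `Λ(δ)`. -/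
def MemLip (n : ℕ) (δ : ℝ) (b : Rn n → ℝ) : Prop :=
  ∃ C : ℝ, 0 ≤ C ∧ ∀ x y : Rn n, |b x - b y| ≤ C * dist x y ^ δ

/-- The multilinear integral operator with kernel `K`. -/
noncomputable def TOp (n m : ℕ) (K : Rn n → (Fin m → Rn n) → ℝ)
    (f : Fin m → Rn n → ℝ) (x : Rn n) : ℝ :=
  ∫ y, K x y * ∏ i, f i (y i) ∂pim n m

/-- The sum-type multilinear commutator `T_{α,b}`. -/
noncomputable def TSumComm (n m : ℕ) (K : Rn n → (Fin m → Rn n) → ℝ)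
    (b : Fin m → Rn n → ℝ) (f : Fin m → Rn n → ℝ) (x : Rn n) : ℝ :=
  ∑ j, ∫ y, (b j x - b j (y j)) * K x y * ∏ i, f i (y i) ∂pim n m

/-- The product-type multilinear commutator `𝒯_{α,b}` (integral representation). -/
noncomputable def TProdComm (n m : ℕ) (K : Rn n → (Fin m → Rn n) → ℝ)
    (b : Fin m → Rn n → ℝ) (f : Fin m → Rn n → ℝ) (x : Rn n) : ℝ :=
  ∫ y, K x y * ∏ i, (b i x - b i (y i)) * f i (y i) ∂pim n m

/-- `‖f · v‖_q` for a real function `f` and a weight `v`. -/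
noncomputable def wLpNorm (n : ℕ) (f : Rn n → ℝ) (v : Rn n → ℝ≥0∞) (q : ℝ≥0∞) : ℝ≥0∞ :=
  LpNormE volume (fun x => ENNReal.ofReal |f x| * v x) q

/-- The (nonnegative) multilinear fractional integral `I_{a,m}`. -/
noncomputable def IfracE (n m : ℕ) (a : ℝ) (g : Fin m → Rn n → ℝ≥0∞) (x : Rn n) : ℝ≥0∞ :=
  ∫⁻ y, (∑ i, edist x (y i)) ^ (a - (m : ℝ) * (n : ℝ)) * ∏ i, g i (y i) ∂pim n m

/-- Commuting with `b` in the `j`-th entry. -/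
noncomputable def commAt (n m : ℕ) (T : (Fin m → Rn n → ℝ) → Rn n → ℝ)
    (g : Rn n → ℝ) (j : Fin m) (f : Fin m → Rn n → ℝ) (x : Rn n) : ℝ :=
  g x * T f x - T (Function.update f j fun z => g z * f j z) x

/-- The iterated commutator `[b_k, … [b_2, [b_1, T]_1]_2 … ]_k`. -/
noncomputable def iterComm (n m : ℕ) (T : (Fin m → Rn n → ℝ) → Rn n → ℝ)
    (b : Fin m → Rn n → ℝ) : ℕ → (Fin m → Rn n → ℝ) → Rn n → ℝ
  | 0 => T
  | k + 1 => fun f x =>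
      if h : k < m then commAt n m (iterComm n m T b k) (b ⟨k, h⟩) ⟨k, h⟩ f x
      else iterComm n m T b k f x

end

/-! ### Integration tools -/

/-- **Tonelli's theorem** for a product of functions of separate variables. -/
lemma lintegral_pi_prod {m : ℕ} {E : Type*} [MeasurableSpace E] (μ : Measure E) [SigmaFinite μ]
    (F : Fin m → E → ℝ≥0∞) (hF : ∀ i, Measurable (F i)) :
    ∫⁻ y, ∏ i, F i (y i) ∂(Measure.pi fun _ : Fin m => μ) = ∏ i, ∫⁻ y, F i y ∂μ := by
  induction m with
  | zero => simp
  | succ m ih =>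
    have h := (measurePreserving_piFinSuccAbove (fun _ : Fin (m + 1) => μ) 0).symm
    rw [← h.lintegral_comp_emb (MeasurableEquiv.measurableEmbedding _)]
    simp_rw [MeasurableEquiv.piFinSuccAbove_symm_apply, Fin.insertNthEquiv,
      Fin.prod_univ_succ, Fin.insertNth_zero, Equiv.coe_fn_mk, Fin.cons_succ, Fin.cons_zero]
    rw [← ih (fun i => F i.succ) (fun i => hF _)]
    rw [← lintegral_prod_mul (hF 0).aemeasurable]
    · rfl
    · exact (Finset.measurable_prod _ fun i _ =>
        (hF i.succ).comp (measurable_pi_apply i)).aemeasurable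

lemma vol_ball (n : ℕ) (c : Rn n) {R : ℝ} (hR : 0 < R) :
    volume (ball c R) = ENNReal.ofReal R ^ (n : ℝ) * volume (ball (0 : Rn n) 1) := by
  rw [Measure.addHaar_ball_of_pos volume c hR, finrank_euclideanSpace_fin,
    ENNReal.ofReal_pow hR.le, ENNReal.rpow_natCast]

lemma vol_ne_zero (n : ℕ) (c : Rn n) {R : ℝ} (hR : 0 < R) : volume (ball c R) ≠ 0 :=
  (measure_ball_pos volume c hR).ne'

lemma vol_ne_top (n : ℕ) (c : Rn n) (R : ℝ) : volume (ball c R) ≠ ∞ :=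
  measure_ball_lt_top.ne

/-- The kernel `|z|^{-θn}` is integrable near the origin, and its integral scales like a power of
the volume. -/
lemma kernel_scaling (n : ℕ) (hn : 1 ≤ n) (θ : ℝ) (h0 : 0 ≤ θ) (h1 : θ < 1) :
    ∃ A : ℝ≥0∞, A ≠ ∞ ∧ ∀ (c : Rn n) (R : ℝ), 0 < R →
      ∫⁻ z in ball (0 : Rn n) (3 * R), (‖z‖ₑ⁻¹) ^ (θ * n) ≤
        A * volume (ball c R) ^ (1 - θ) := by
  have hn' : (0 : ℝ) < n := by exact_mod_cast hn
  set s : ℝ := θ * n with hs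
  have hs0 : 0 ≤ s := by positivity
  set A0 := ∫⁻ z in ball (0 : Rn n) 3, (‖z‖ₑ⁻¹) ^ s with hA0
  have hA0top : A0 ≠ ∞ := by
    have hint : IntegrableOn (fun z : Rn n => ‖z‖ ^ (-s)) (ball 0 3) volume := by
      apply integrableOn_ball_of_norm_le_rpow (C := 1) (α := s)
      · simp only [finrank_euclideanSpace_fin]; rw [hs]; nlinarith
      · refine Filter.Eventually.of_forall fun x => ?_
        rw [one_mul, Real.norm_of_nonneg (by positivity)]
      · exact (by fun_prop : Measurable fun z : Rn n => ‖z‖ ^ (-s)).aestronglyMeasurable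
      · simpa using hn
    have h2 := hint.2
    rw [HasFiniteIntegral] at h2
    refine (lt_of_le_of_lt (le_of_eq ?_) h2).ne
    have : Nonempty (Fin n) := ⟨⟨0, hn⟩⟩
    have hne : ∀ᵐ z ∂(volume.restrict (ball (0 : Rn n) 3)), z ≠ 0 :=
      ae_restrict_of_ae (by simp [ae_iff, measure_singleton])
    refine lintegral_congr_ae ?_
    filter_upwards [hne] with z hz
    have hz' : 0 < ‖z‖ := norm_pos_iff.2 hz
    rw [← ofReal_norm, ← ofReal_norm, Real.norm_of_nonneg (by positivity),
      ENNReal.inv_rpow, ENNReal.ofReal_rpow_of_pos hz', Real.rpow_neg hz'.le,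
      ENNReal.ofReal_inv_of_pos (by positivity)]
  set b := volume (ball (0 : Rn n) 1) with hb
  have hb0 : b ≠ 0 := vol_ne_zero n 0 one_pos
  have hbt : b ≠ ∞ := vol_ne_top n 0 1
  refine ⟨A0 * (b ^ (1 - θ))⁻¹, ENNReal.mul_ne_top hA0top
    (ENNReal.inv_ne_top.2 (by simp [ENNReal.rpow_eq_zero_iff, hb0, hbt])), fun c R hR => ?_⟩
  set r := ENNReal.ofReal R with hr
  have hr0 : r ≠ 0 := by simpa [hr] using hR
  have hrt : r ≠ ∞ := ENNReal.ofReal_ne_top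
  have key : A0 * (r⁻¹) ^ s = (r ^ (n : ℝ))⁻¹ *
      ∫⁻ z in ball (0 : Rn n) (3 * R), (‖z‖ₑ⁻¹) ^ s := by
    have hmeas : Measurable fun z : Rn n => (‖z‖ₑ⁻¹) ^ s := by fun_prop
    have e := lintegral_map (μ := (volume : Measure (Rn n)))
      (hmeas.indicator (measurableSet_ball (x := (0 : Rn n)) (ε := 3 * R)))
      (measurable_const_smul R)
    rw [Measure.map_addHaar_smul volume hR.ne', lintegral_smul_measure,
      lintegral_indicator measurableSet_ball, smul_eq_mul, finrank_euclideanSpace_fin,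
      abs_of_pos (by positivity), ENNReal.ofReal_inv_of_pos (by positivity),
      ENNReal.ofReal_pow hR.le, ← ENNReal.rpow_natCast] at e
    rw [e, hA0, ← lintegral_indicator measurableSet_ball, ← lintegral_mul_const _
      (hmeas.indicator measurableSet_ball)]
    refine lintegral_congr fun z => ?_
    have hmem : R • z ∈ ball (0 : Rn n) (3 * R) ↔ z ∈ ball (0 : Rn n) 3 := by
      simp only [mem_ball_zero_iff, norm_smul, Real.norm_of_nonneg hR.le]
      constructor <;> intro h <;> nlinarith
    by_cases hz : z ∈ ball (0 : Rn n) 3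
    · rw [indicator_of_mem hz, indicator_of_mem (hmem.2 hz), enorm_smul,
        Real.enorm_of_nonneg hR.le, ENNReal.mul_inv (Or.inl hr0) (Or.inl hrt),
        ENNReal.mul_rpow_of_nonneg _ _ hs0, mul_comm]
    · rw [indicator_of_notMem hz, indicator_of_notMem (fun h => hz (hmem.1 h)), zero_mul]
  have key2 : ∫⁻ z in ball (0 : Rn n) (3 * R), (‖z‖ₑ⁻¹) ^ s =
      A0 * r ^ ((n : ℝ) * (1 - θ)) := by
    have hrn0 : r ^ (n : ℝ) ≠ 0 := by simp [hr0]
    have hrnt : r ^ (n : ℝ) ≠ ∞ := by simp [hrt]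
    have : r ^ ((n : ℝ) * (1 - θ)) = r ^ (n : ℝ) * (r⁻¹) ^ s := by
      rw [ENNReal.inv_rpow, ← ENNReal.rpow_neg, ← ENNReal.rpow_add _ _ hr0 hrt]
      congr 1; rw [hs]; ring
    rw [this, mul_left_comm, key, ← mul_assoc, ENNReal.mul_inv_cancel hrn0 hrnt, one_mul]
  rw [key2, vol_ball n c hR, ENNReal.mul_rpow_of_nonneg _ _ (by linarith), ← ENNReal.rpow_mul,
    ← hb]
  have hbt' : b ^ (1 - θ) ≠ 0 := by simp [ENNReal.rpow_eq_zero_iff, hb0, hbt]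
  have hbt'' : b ^ (1 - θ) ≠ ∞ := by simp [ENNReal.rpow_eq_top_iff, hb0, hbt]
  rw [mul_comm (r ^ _) (b ^ _), mul_assoc, ← mul_assoc (b ^ _)⁻¹, ENNReal.inv_mul_cancel hbt' hbt'',
    one_mul]

/-- **Schur's test** with equal row and column bounds: a nonnegative kernel whose marginals are
bounded by `M` acts on `L^s` with norm at most `M`. -/
lemma schur_test {X Y : Type*} [MeasurableSpace X] [MeasurableSpace Y] (μ : Measure X)
    (ν : Measure Y) [SFinite μ] [SFinite ν] (k : X → Y → ℝ≥0∞)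
    (hk : Measurable (Function.uncurry k)) (u : Y → ℝ≥0∞) (hu : Measurable u) (M : ℝ≥0∞)
    (h1 : ∀ᵐ x ∂μ, ∫⁻ y, k x y ∂ν ≤ M) (h2 : ∀ᵐ y ∂ν, ∫⁻ x, k x y ∂μ ≤ M)
    (s : ℝ) (hs : 1 ≤ s) :
    ∫⁻ x, (∫⁻ y, k x y * u y ∂ν) ^ s ∂μ ≤ M ^ s * ∫⁻ y, u y ^ s ∂ν := by
  have hs0 : 0 < s := by linarith
  have hs1 : 0 ≤ 1 - s⁻¹ := sub_nonneg.2 (inv_le_one_of_one_le₀ hs)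
  have hkm : ∀ x, Measurable (k x) := fun x => hk.comp measurable_prodMk_left
  have step : ∀ᵐ x ∂μ, (∫⁻ y, k x y * u y ∂ν) ^ s ≤ M ^ (s - 1) * ∫⁻ y, k x y * u y ^ s ∂ν := by
    filter_upwards [h1] with x hx
    have e : ∀ y, k x y * u y = k x y ^ (1 - s⁻¹) * (k x y * u y ^ s) ^ s⁻¹ := fun y => by
      rw [ENNReal.mul_rpow_of_nonneg _ _ (by positivity), ← mul_assoc,
        ← ENNReal.rpow_add_of_nonneg _ _ hs1 (by positivity), ← ENNReal.rpow_mul,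
        mul_inv_cancel₀ hs0.ne', sub_add_cancel, ENNReal.rpow_one, ENNReal.rpow_one]
    have := ENNReal.lintegral_mul_norm_pow_le (μ := ν) (hkm x).aemeasurable
      ((hkm x).mul (hu.pow_const s)).aemeasurable hs1 (by positivity : (0 : ℝ) ≤ s⁻¹) (by ring)
    simp only [Pi.mul_apply] at this
    simp_rw [← e] at this
    calc _ ≤ _ := ENNReal.rpow_le_rpow this hs0.le
      _ = (∫⁻ y, k x y ∂ν) ^ (s - 1) * ∫⁻ y, k x y * u y ^ s ∂ν := by
        rw [ENNReal.mul_rpow_of_nonneg _ _ hs0.le, ← ENNReal.rpow_mul, ← ENNReal.rpow_mul,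
          inv_mul_cancel₀ hs0.ne', ENNReal.rpow_one]
        congr 2; field_simp
      _ ≤ _ := by gcongr
  calc _ ≤ ∫⁻ x, M ^ (s - 1) * ∫⁻ y, k x y * u y ^ s ∂ν ∂μ := lintegral_mono_ae step
    _ = M ^ (s - 1) * ∫⁻ y, ∫⁻ x, k x y * u y ^ s ∂μ ∂ν := by
      have hm : Measurable (Function.uncurry fun x y => k x y * u y ^ s) :=
        hk.mul ((hu.comp measurable_snd).pow_const s)
      rw [lintegral_const_mul _ hm.lintegral_prod_right, lintegral_lintegral_swap hm.aemeasurable]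
    _ ≤ M ^ (s - 1) * ∫⁻ y, M * u y ^ s ∂ν := by
      refine mul_le_mul_right ?_ _
      refine lintegral_mono_ae ?_
      filter_upwards [h2] with y hy
      rw [lintegral_mul_const _ (show Measurable fun x => k x y from hk.comp measurable_prodMk_right)]
      gcongr
    _ = _ := by
      rw [lintegral_const_mul _ (hu.pow_const s), ← mul_assoc]
      congr 1
      conv_lhs => rw [← ENNReal.rpow_one M, ← ENNReal.rpow_mul]
      rw [one_mul, ← ENNReal.rpow_add_of_nonneg _ _ (by linarith) zero_le_one, sub_add_cancel]

/-! ### Conjugate exponents and `L^p` norms of nonnegative functions -/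

/-- The reciprocal `1/p'` of the conjugate exponent, as a real number:
`1/p' = 1 - 1/p`, which is `0` for `p = 1` and `1` for `p = ∞`. -/
noncomputable def conjInv (p : ℝ≥0∞) : ℝ := 1 - (p⁻¹).toReal

lemma conjInv_nonneg {p : ℝ≥0∞} (hp : 1 ≤ p) : 0 ≤ conjInv p := by
  have : (p⁻¹).toReal ≤ 1 := ENNReal.toReal_le_of_le_ofReal zero_le_one (by simpa using hp)
  simpa [conjInv] using this

lemma conjInv_le_one (p : ℝ≥0∞) : conjInv p ≤ 1 := by
  simp [conjInv]

lemma conjR_facts {p : ℝ≥0∞} (hp : 1 < p) :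
    1 ≤ conjR p ∧ conjE p ≠ ∞ ∧ (conjE p).toReal = conjR p ∧ conjInv p = (conjR p)⁻¹ := by
  by_cases ht : p = ∞
  · subst ht
    simp [conjR, conjE, conjInv]
  · have h1 : 1 < p.toReal := by
      rw [← ENNReal.toReal_one]; exact (ENNReal.toReal_lt_toReal (by simp) ht).2 hp
    have h2 : 0 < p.toReal - 1 := by linarith
    have h3 : 1 ≤ p.toReal / (p.toReal - 1) := by rw [le_div_iff₀ h2]; linarith
    refine ⟨by simpa [conjR, ht] using h3, by simp [conjE, ht, hp.ne'], ?_, ?_⟩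
    · simp only [conjE, conjR, ht, hp.ne', if_false]
      rw [ENNReal.toReal_ofReal (by linarith)]
    · simp only [conjInv, conjR, ht, if_false, ENNReal.toReal_inv]
      field_simp

lemma LpNormE_mono_measure {X : Type*} [MeasurableSpace X] {μ ν : Measure X} (h : μ ≤ ν)
    (g : X → ℝ≥0∞) (q : ℝ≥0∞) : LpNormE μ g q ≤ LpNormE ν g q := by
  unfold LpNormE
  split_ifs
  · exact essSup_mono_measure (Measure.absolutelyContinuous_of_le h)
  · exact ENNReal.rpow_le_rpow (lintegral_mono' h le_rfl) (by positivity)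

lemma LpNormE_mono_ae {X : Type*} [MeasurableSpace X] {μ : Measure X}
    {g h : X → ℝ≥0∞} (hgh : ∀ᵐ x ∂μ, g x ≤ h x) (q : ℝ≥0∞) : LpNormE μ g q ≤ LpNormE μ h q := by
  unfold LpNormE
  split_ifs
  · exact essSup_mono_ae hgh
  · refine ENNReal.rpow_le_rpow (lintegral_mono_ae ?_) (by positivity)
    filter_upwards [hgh] with x hx
    exact ENNReal.rpow_le_rpow hx (by positivity)

lemma LpNormE_const_mul {X : Type*} [MeasurableSpace X] {μ : Measure X}
    {g : X → ℝ≥0∞} (hg : Measurable g) (a : ℝ≥0∞) (q : ℝ≥0∞) (hq : 1 ≤ q) :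
    LpNormE μ (fun x => a * g x) q = a * LpNormE μ g q := by
  unfold LpNormE
  split_ifs with h
  · exact ENNReal.essSup_const_mul
  · have hq0 : 0 < q.toReal := ENNReal.toReal_pos (by positivity) h
    simp_rw [ENNReal.mul_rpow_of_nonneg _ _ hq0.le]
    rw [lintegral_const_mul _ (hg.pow_const _), ENNReal.mul_rpow_of_nonneg _ _ (by positivity),
      ← ENNReal.rpow_mul, mul_one_div_cancel hq0.ne', ENNReal.rpow_one]

lemma LpNormE_ne_zero {X : Type*} [MeasurableSpace X] {μ : Measure X} (hμ : μ ≠ 0)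
    {g : X → ℝ≥0∞} (hg : Measurable g) (hg0 : ∀ᵐ x ∂μ, g x ≠ 0) {q : ℝ≥0∞} (hq : 1 ≤ q) :
    LpNormE μ g q ≠ 0 := by
  have := ae_neBot.2 hμ
  have hnot : ¬ ∀ᵐ x ∂μ, g x = 0 := fun h => by
    obtain ⟨x, h1, h2⟩ := (hg0.and h).exists
    exact h1 h2
  unfold LpNormE
  split_ifs with h
  · rw [Ne, ENNReal.essSup_eq_zero_iff]
    exact hnot
  · have hq0 : 0 < q.toReal := ENNReal.toReal_pos (by positivity) h
    intro h0
    rw [ENNReal.rpow_eq_zero_iff_of_pos (by positivity),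
      lintegral_eq_zero_iff (hg.pow_const _)] at h0
    refine hnot ?_
    filter_upwards [h0] with x hx
    simpa [ENNReal.rpow_eq_zero_iff_of_pos hq0] using hx

lemma one_le_conjE {p : ℝ≥0∞} (hp : 1 ≤ p) : 1 ≤ conjE p := by
  rcases hp.eq_or_lt with rfl | h
  · simp [conjE]
  · obtain ⟨h1, h2, h3, -⟩ := conjR_facts h
    rw [← h3] at h1
    exact (ENNReal.toReal_le_toReal (by simp) h2).1 (by simpa using h1)

/-- **Hölder's inequality** for a product, with the weight `v` inserted in one factor and removed
from the other. -/
lemma holder_weight {X : Type*} [MeasurableSpace X] (μ : Measure X) {g v k : X → ℝ≥0∞}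
    (hg : Measurable g) (hv : Measurable v) (hk : Measurable k)
    (hv' : ∀ᵐ x ∂μ, 0 < v x ∧ v x < ∞) {p : ℝ≥0∞} (hp : 1 ≤ p) :
    ∫⁻ x, g x * k x ∂μ ≤
      LpNormE μ (fun x => g x * v x) p * LpNormE μ (fun x => (v x)⁻¹ * k x) (conjE p) := by
  have e : ∫⁻ x, g x * k x ∂μ = ∫⁻ x, (g x * v x) * ((v x)⁻¹ * k x) ∂μ := by
    refine lintegral_congr_ae ?_
    filter_upwards [hv'] with x hx
    rw [mul_assoc, ← mul_assoc (v x), ENNReal.mul_inv_cancel hx.1.ne' hx.2.ne, one_mul]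
  rw [e]
  have hG : Measurable fun x => g x * v x := hg.mul hv
  have hK : Measurable fun x => (v x)⁻¹ * k x := hv.inv.mul hk
  rcases hp.eq_or_lt with rfl | h1
  · simp only [LpNormE, conjE, if_true, ENNReal.one_ne_top, if_false, ENNReal.toReal_one,
      ENNReal.rpow_one, div_one]
    rw [← lintegral_mul_const _ hG]
    refine lintegral_mono_ae ?_
    filter_upwards [ENNReal.ae_le_essSup (μ := μ) (fun x => (v x)⁻¹ * k x)] with x hx
    exact mul_le_mul_right hx _
  by_cases ht : p = ∞
  · subst ht
    simp only [LpNormE, conjE, if_true, ENNReal.one_ne_top, if_false, ENNReal.toReal_one,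
      ENNReal.rpow_one, div_one, ENNReal.top_ne_one]
    rw [← lintegral_const_mul _ hK]
    refine lintegral_mono_ae ?_
    filter_upwards [ENNReal.ae_le_essSup (μ := μ) (fun x => g x * v x)] with x hx
    exact mul_le_mul_left hx _
  · obtain ⟨-, h2, h3, -⟩ := conjR_facts h1
    have h1' : 1 < p.toReal := by
      rw [← ENNReal.toReal_one]; exact (ENNReal.toReal_lt_toReal (by simp) ht).2 h1
    simp only [LpNormE, ht, h2, if_false, h3]
    refine ENNReal.lintegral_mul_le_Lp_mul_Lq μ ?_ hG.aemeasurable hK.aemeasurable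
    simp only [conjR, ht, if_false]
    exact Real.HolderConjugate.conjExponent h1'

/-! ### The linear factors -/

/-- The `L^m(B)` bound for one linear factor
`x ↦ ∫_{2B} |f(y)| |x - y|^{-θn/p'} dy` of the majorant of the multilinear integral.
For `p > 1`, Hölder reduces it to the `L^m` norm of `|·|^{-θn} * (v^{-p'} χ_{2B})`, which Schur's
test and the reverse Hölder inequality control; for `p = 1` the kernel is trivial. -/
lemma factor_bound (n m : ℕ) (hn : 1 ≤ n) (hm : 1 ≤ m) (θ : ℝ) (h0 : 0 ≤ θ) (h1 : θ < 1)
    (p : ℝ≥0∞) (hp : 1 ≤ p) (v : Rn n → ℝ≥0∞) (hv : IsWeight n v)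
    (hRH : 1 < p → MemRH n (m : ℝ) fun x => (v x)⁻¹ ^ conjR p) :
    ∃ A : ℝ≥0∞, A ≠ ∞ ∧ ∀ (c : Rn n) (R : ℝ), 0 < R → ∀ f : Rn n → ℝ, Measurable f →
      (∫⁻ x in ball c R, (∫⁻ y in ball c (2 * R), ENNReal.ofReal |f y| *
          ((edist x y)⁻¹) ^ (θ * n * conjInv p)) ^ (m : ℝ)) ^ (m : ℝ)⁻¹ ≤
        A * volume (ball c R) ^ ((m : ℝ)⁻¹ - θ * conjInv p) *
          (wLpNorm n f v p *
            LpNormE (volume.restrict (ball c (2 * R))) (fun y => (v y)⁻¹) (conjE p)) := by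
  have hm' : (1 : ℝ) ≤ m := by exact_mod_cast hm
  have hm0 : (0 : ℝ) < m := by linarith
  have hn' : (0 : ℝ) < n := by exact_mod_cast hn
  have hvm : Measurable v := hv.1
  have hfv : ∀ (c : Rn n) (R : ℝ) (f : Rn n → ℝ),
      LpNormE (volume.restrict (ball c R)) (fun x => ENNReal.ofReal |f x| * v x) p ≤
        wLpNorm n f v p := fun c R f => LpNormE_mono_measure Measure.restrict_le_self _ _
  rcases hp.eq_or_lt with rfl | hp1
  · refine ⟨1, by simp, fun c R hR f hf => ?_⟩
    have hc : conjInv 1 = 0 := by simp [conjInv]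
    have hbd : ∀ x : Rn n, ∫⁻ y in ball c (2 * R), ENNReal.ofReal |f y| *
        ((edist x y)⁻¹) ^ (θ * n * conjInv 1) ≤ wLpNorm n f v 1 *
            LpNormE (volume.restrict (ball c (2 * R))) (fun y => (v y)⁻¹) (conjE 1) := fun x => by
      have := holder_weight (volume.restrict (ball c (2 * R))) (k := fun _ => 1)
        (hf.abs.ennreal_ofReal) hvm measurable_const (ae_restrict_of_ae hv.2.1) hp
      simp only [hc, mul_zero, ENNReal.rpow_zero]
      refine this.trans ?_
      simp only [mul_one]
      gcongr
      exact hfv c _ f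
    rw [show (m : ℝ)⁻¹ - θ * conjInv 1 = (m : ℝ)⁻¹ by simp [hc], one_mul]
    set D := wLpNorm n f v 1 *
            LpNormE (volume.restrict (ball c (2 * R))) (fun y => (v y)⁻¹) (conjE 1)
    calc _ ≤ (∫⁻ x in ball c R, D ^ (m : ℝ)) ^ (m : ℝ)⁻¹ := by
          gcongr with x
          exact hbd x
      _ = _ := by
          rw [lintegral_const, Measure.restrict_apply_univ,
            ENNReal.mul_rpow_of_nonneg _ _ (by positivity), ← ENNReal.rpow_mul,
            mul_inv_cancel₀ hm0.ne', ENNReal.rpow_one, mul_comm]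
  · obtain ⟨hq1, hq2, hq3, hq4⟩ := conjR_facts hp1
    obtain ⟨A, hA, hAK⟩ := kernel_scaling n hn θ h0 h1
    obtain ⟨Cr, hCr, hRH⟩ := hRH hp1
    set q := conjR p with hq
    set s := conjInv p with hs
    have hs0 : 0 ≤ s := conjInv_nonneg hp
    have hs1 : s ≤ 1 := conjInv_le_one p
    have hsq : s * q = 1 := by rw [hq4]; field_simp
    refine ⟨A ^ s * Cr ^ s, ENNReal.mul_ne_top (ENNReal.rpow_ne_top_of_nonneg hs0 hA)
      (ENNReal.rpow_ne_top_of_nonneg hs0 hCr), fun c R hR f hf => ?_⟩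
    set V := volume (ball c R) with hV
    have hV0 : V ≠ 0 := vol_ne_zero n c hR
    have hVt : V ≠ ∞ := vol_ne_top n c R
    set V2 := volume (ball c (2 * R)) with hV2
    have hV20 : V2 ≠ 0 := vol_ne_zero n c (by linarith)
    have hV2t : V2 ≠ ∞ := vol_ne_top n c _
    have hVV2 : V ≤ V2 := measure_mono (ball_subset_ball (by linarith))
    set σ : Rn n → ℝ≥0∞ := fun y => (v y)⁻¹ ^ q with hσ
    have hσm : Measurable σ := hvm.inv.pow_const _
    set F := wLpNorm n f v p with hF
    set S := ∫⁻ y in ball c (2 * R), σ y with hS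
    set T := ∫⁻ y in ball c (2 * R), σ y ^ (m : ℝ) with hT
    have hN : LpNormE (volume.restrict (ball c (2 * R))) (fun y => (v y)⁻¹) (conjE p) = S ^ s := by
      simp only [LpNormE, hq2, if_false, hq3, one_div, ← hq4, hS, hσ]
    rw [hN]
    set K : Rn n → Rn n → ℝ≥0∞ := fun x y => ((edist x y)⁻¹) ^ (θ * n) with hK
    have hKm : Measurable (Function.uncurry K) := by
      simp only [hK, Function.uncurry_def]
      exact (measurable_edist.inv).pow_const _
    set h : Rn n → ℝ≥0∞ := fun x => ∫⁻ y in ball c (2 * R), K x y * σ y with hh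
    have hKσ : Measurable (Function.uncurry fun x y => K x y * σ y) :=
      hKm.mul (hσm.comp measurable_snd)
    have hhm : Measurable h := hKσ.lintegral_prod_right
    -- Hölder in `y`
    have hJ : ∀ x, ∫⁻ y in ball c (2 * R), ENNReal.ofReal |f y| *
        ((edist x y)⁻¹) ^ (θ * n * s) ≤ F * h x ^ s := fun x => by
      have hkm : Measurable fun y => ((edist x y)⁻¹) ^ (θ * n * s) :=
        (measurable_edist_right.inv).pow_const _
      refine (holder_weight (volume.restrict (ball c (2 * R))) (hf.abs.ennreal_ofReal) hvm hkm
        (ae_restrict_of_ae hv.2.1) hp).trans ?_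
      refine mul_le_mul' (hfv c _ f) (le_of_eq ?_)
      simp only [LpNormE, hq2, if_false, hq3, one_div, ← hq4, hh]
      congr 1
      refine lintegral_congr fun y => ?_
      rw [ENNReal.mul_rpow_of_nonneg _ _ (by linarith), ← ENNReal.rpow_mul, mul_assoc, hsq,
        mul_one, mul_comm]
    -- both marginals of the kernel live in a ball of radius `3R`
    have hmarg : ∀ x y : Rn n, x ∈ ball c R → y ∈ ball c (2 * R) →
        y - x ∈ ball (0 : Rn n) (3 * R) :=
      fun x y hx hy => by
        rw [mem_ball_zero_iff, ← dist_eq_norm]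
        have := dist_triangle_right y x c
        rw [mem_ball] at hx hy
        linarith
    have hM1 : ∀ x ∈ ball c R, ∫⁻ y in ball c (2 * R), K x y ≤ A * V ^ (1 - θ) := fun x hx => by
      refine le_trans ?_ (hAK c R hR)
      rw [← lintegral_indicator measurableSet_ball, ← lintegral_indicator measurableSet_ball,
        ← lintegral_sub_right_eq_self
          ((ball (0 : Rn n) (3 * R)).indicator fun z => (‖z‖ₑ⁻¹) ^ (θ * n)) x]
      refine lintegral_mono fun y => ?_
      by_cases hy : y ∈ ball c (2 * R)
      · rw [indicator_of_mem hy, indicator_of_mem (hmarg x y hx hy)]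
        simp only [hK]; rw [edist_comm, edist_eq_enorm_sub]
      · rw [indicator_of_notMem hy]; exact zero_le
    have hM2 : ∀ y ∈ ball c (2 * R), ∫⁻ x in ball c R, K x y ≤ A * V ^ (1 - θ) := fun y hy => by
      refine le_trans ?_ (hAK c R hR)
      rw [← lintegral_indicator measurableSet_ball, ← lintegral_indicator measurableSet_ball,
        ← lintegral_sub_left_eq_self
          ((ball (0 : Rn n) (3 * R)).indicator fun z => (‖z‖ₑ⁻¹) ^ (θ * n)) y]
      refine lintegral_mono fun x => ?_
      by_cases hx : x ∈ ball c R
      · rw [indicator_of_mem hx, indicator_of_mem (hmarg x y hx hy)]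
        simp only [hK]; rw [edist_comm, edist_eq_enorm_sub]
      · rw [indicator_of_notMem hx]; exact zero_le
    have hschur : ∫⁻ x in ball c R, h x ^ (m : ℝ) ≤ (A * V ^ (1 - θ)) ^ (m : ℝ) * T :=
      schur_test _ _ K hKm σ hσm _ ((ae_restrict_iff' measurableSet_ball).2
        (Filter.Eventually.of_forall hM1)) ((ae_restrict_iff' measurableSet_ball).2
        (Filter.Eventually.of_forall hM2)) m hm'
    -- reverse Hölder on `2B`
    have hTS : T ^ (m : ℝ)⁻¹ ≤ Cr * (V ^ ((m : ℝ)⁻¹ - 1) * S) := by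
      have hr := hRH c (2 * R) (by linarith)
      rw [ENNReal.mul_rpow_of_nonneg _ _ (by positivity)] at hr
      have e : T ^ (m : ℝ)⁻¹ = V2 ^ (m : ℝ)⁻¹ * (V2⁻¹ ^ (m : ℝ)⁻¹ * T ^ (m : ℝ)⁻¹) := by
        rw [← mul_assoc, ← ENNReal.mul_rpow_of_nonneg _ _ (by positivity),
          ENNReal.mul_inv_cancel hV20 hV2t, ENNReal.one_rpow, one_mul]
      calc T ^ (m : ℝ)⁻¹ ≤ V2 ^ (m : ℝ)⁻¹ * (Cr * (V2⁻¹ * S)) := by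
            rw [e]; exact mul_le_mul_right hr _
        _ = Cr * (V2 ^ ((m : ℝ)⁻¹ - 1) * S) := by
            rw [ENNReal.rpow_sub _ _ hV20 hV2t, ENNReal.rpow_one, ENNReal.div_eq_inv_mul]; ring
        _ ≤ _ := by
            refine mul_le_mul_right (mul_le_mul_left ?_ _) _
            rw [← neg_sub, ENNReal.rpow_neg, ENNReal.rpow_neg, ENNReal.inv_le_inv]
            exact ENNReal.rpow_le_rpow hVV2 (sub_nonneg.2 (inv_le_one_of_one_le₀ hm'))
    -- Jensen's inequality on `B`, the exponent `s = 1/p'` being at most `1`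
    have hJens : ∫⁻ x in ball c R, (h x ^ (m : ℝ)) ^ s ≤
        V ^ (1 - s) * (∫⁻ x in ball c R, h x ^ (m : ℝ)) ^ s := by
      have := ENNReal.lintegral_mul_norm_pow_le (μ := volume.restrict (ball c R))
        (f := fun _ => 1) (g := fun x => h x ^ (m : ℝ)) aemeasurable_const
        (hhm.pow_const _).aemeasurable (sub_nonneg.2 hs1) hs0 (by ring)
      simpa using this
    calc _ ≤ (∫⁻ x in ball c R, F ^ (m : ℝ) * (h x ^ (m : ℝ)) ^ s) ^ (m : ℝ)⁻¹ := by
          refine ENNReal.rpow_le_rpow (lintegral_mono fun x => ?_) (by positivity)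
          refine (ENNReal.rpow_le_rpow (hJ x) hm0.le).trans (le_of_eq ?_)
          rw [ENNReal.mul_rpow_of_nonneg _ _ hm0.le, ← ENNReal.rpow_mul, ← ENNReal.rpow_mul,
            mul_comm s]
      _ ≤ (F ^ (m : ℝ) * (V ^ (1 - s) * ((A * V ^ (1 - θ)) ^ (m : ℝ) * T) ^ s)) ^ (m : ℝ)⁻¹ := by
          rw [lintegral_const_mul _ ((hhm.pow_const _).pow_const _)]
          gcongr ?_ ^ _
          refine mul_le_mul_right (hJens.trans ?_) _
          gcongr
      _ = F * (V ^ ((1 - s) * (m : ℝ)⁻¹) * (A ^ s * V ^ ((1 - θ) * s) * (T ^ (m : ℝ)⁻¹) ^ s)) := by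
          have hmi : (0 : ℝ) ≤ (m : ℝ)⁻¹ := by positivity
          rw [ENNReal.mul_rpow_of_nonneg _ _ hmi, ENNReal.mul_rpow_of_nonneg _ _ hmi,
            ← ENNReal.rpow_mul, ← ENNReal.rpow_mul V, mul_inv_cancel₀ hm0.ne', ENNReal.rpow_one,
            ← ENNReal.rpow_mul _ s, mul_comm s (m : ℝ)⁻¹, ENNReal.rpow_mul _ (m : ℝ)⁻¹ s,
            ENNReal.mul_rpow_of_nonneg _ _ hmi, ← ENNReal.rpow_mul _ (m : ℝ) (m : ℝ)⁻¹,
            mul_inv_cancel₀ hm0.ne', ENNReal.rpow_one, ENNReal.mul_rpow_of_nonneg _ _ hs0,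
            ENNReal.mul_rpow_of_nonneg _ _ hs0, ← ENNReal.rpow_mul V]
      _ ≤ F * (V ^ ((1 - s) * (m : ℝ)⁻¹) * (A ^ s * V ^ ((1 - θ) * s) *
            (Cr * (V ^ ((m : ℝ)⁻¹ - 1) * S)) ^ s)) := by gcongr
      _ = _ := by
          rw [ENNReal.mul_rpow_of_nonneg _ _ hs0, ENNReal.mul_rpow_of_nonneg _ _ hs0,
            ← ENNReal.rpow_mul V]
          have : V ^ ((m : ℝ)⁻¹ - θ * s) = V ^ ((1 - s) * (m : ℝ)⁻¹) * V ^ ((1 - θ) * s) *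
              V ^ (((m : ℝ)⁻¹ - 1) * s) := by
            rw [← ENNReal.rpow_add _ _ hV0 hVt, ← ENNReal.rpow_add _ _ hV0 hVt]
            congr 1; ring
          rw [this]; ring

/-! ### Majorant of the kernel and localization of the `H_m` condition -/

lemma prod_rpow_eq {ι : Type*} (s : Finset ι) (x : ℝ≥0∞) (hx0 : x ≠ 0) (hxt : x ≠ ∞) (e : ι → ℝ) :
    ∏ i ∈ s, x ^ e i = x ^ ∑ i ∈ s, e i := by
  induction s using Finset.cons_induction with
  | empty => simp
  | cons i s hi ih =>
    rw [Finset.prod_cons, Finset.sum_cons, ih, ENNReal.rpow_add _ _ hx0 hxt]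

lemma prod_rpow_eq_of_nonneg {ι : Type*} (s : Finset ι) (x : ℝ≥0∞) (e : ι → ℝ)
    (he : ∀ i, 0 ≤ e i) : ∏ i ∈ s, x ^ e i = x ^ ∑ i ∈ s, e i := by
  induction s using Finset.cons_induction with
  | empty => simp
  | cons i s hi ih =>
    rw [Finset.prod_cons, Finset.sum_cons, ih,
      ENNReal.rpow_add_of_nonneg _ _ (he i) (Finset.sum_nonneg fun j _ => he j)]

/-- Distributing the homogeneity `mn - a` of the kernel as `∑ s i` over the variables majorizes the
multilinear fractional integral by a product of linear ones. -/
lemma Ifrac_le_prod (n m : ℕ) (a : ℝ) (s : Fin m → ℝ) (hs : ∀ i, 0 ≤ s i)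
    (hsum : ∑ i, s i = (m : ℝ) * n - a) (g : Fin m → Rn n → ℝ≥0∞) (hg : ∀ i, Measurable (g i))
    (x : Rn n) :
    IfracE n m a g x ≤ ∏ i, ∫⁻ y, g i y * ((edist x y)⁻¹) ^ s i := by
  have hm : ∀ i, Measurable fun y => g i y * ((edist x y)⁻¹) ^ s i := fun i =>
    (hg i).mul ((measurable_edist_right.inv).pow_const _)
  rw [← lintegral_pi_prod volume _ hm]
  refine lintegral_mono fun y => ?_
  rw [Finset.prod_mul_distrib, mul_comm]
  refine mul_le_mul_right ?_ _
  rw [show a - (m : ℝ) * n = -∑ i, s i by rw [hsum]; ring, ENNReal.rpow_neg, ← ENNReal.inv_rpow,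
    ← prod_rpow_eq_of_nonneg _ _ _ hs]
  refine Finset.prod_le_prod' fun i _ => ENNReal.rpow_le_rpow ?_ (hs i)
  exact ENNReal.inv_le_inv.2 (Finset.single_le_sum (f := fun i => edist x (y i))
    (fun _ _ => zero_le) (Finset.mem_univ i))

/-- On `2B` the quantity `|B|^{1/n} + |x_B - y|` is comparable to `|B|^{1/n}`, so the norm of
`v⁻¹` over `2B` is controlled by the corresponding factor of the `H_m` condition. -/
lemma local_le_HmFactor (n m : ℕ) (hn : 1 ≤ n) (δ : ℝ) (β : Fin m → ℝ) (p : Fin m → ℝ≥0∞)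
    (v : Fin m → Rn n → ℝ≥0∞) (i : Fin m) (hp : 1 ≤ p i) (hv : Measurable (v i))
    (he : 0 ≤ (n : ℝ) - β i + δ / m) :
    ∃ κ : ℝ≥0∞, κ ≠ ∞ ∧ ∀ (c : Rn n) (R : ℝ), 0 < R →
      LpNormE (volume.restrict (ball c (2 * R))) (fun y => (v i y)⁻¹) (conjE (p i)) ≤
        κ * volume (ball c R) ^ (((n : ℝ) - β i + δ / m) * (n : ℝ)⁻¹) *
          HmFactor n m δ β p v c R i := by
  have hn' : (0 : ℝ) < n := by exact_mod_cast hn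
  set e := (n : ℝ) - β i + δ / m with he'
  set b := volume (ball (0 : Rn n) 1) with hb
  have hb0 : b ^ (n : ℝ)⁻¹ ≠ 0 := by
    simp [ENNReal.rpow_eq_zero_iff, hb, vol_ne_zero n 0 one_pos, vol_ne_top n 0 1]
  have hbt : b ^ (n : ℝ)⁻¹ ≠ ∞ :=
    ENNReal.rpow_ne_top_of_nonneg (by positivity) (vol_ne_top n 0 1)
  set κ : ℝ≥0∞ := 1 + 2 * (b ^ (n : ℝ)⁻¹)⁻¹ with hκ
  have hκt : κ ≠ ∞ := ENNReal.add_ne_top.2 ⟨by simp, ENNReal.mul_ne_top (by simp)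
    (ENNReal.inv_ne_top.2 hb0)⟩
  have hκ0 : κ ≠ 0 := by simp [hκ]
  refine ⟨κ ^ e, ENNReal.rpow_ne_top_of_nonneg he hκt, fun c R hR => ?_⟩
  set V := volume (ball c R) with hV
  have hV0 : V ≠ 0 := vol_ne_zero n c hR
  have hVt : V ≠ ∞ := vol_ne_top n c R
  set D := V ^ (n : ℝ)⁻¹ with hD
  have hD0 : D ≠ 0 := by simp [hD, ENNReal.rpow_eq_zero_iff, hV0, hVt]
  have hDt : D ≠ ∞ := ENNReal.rpow_ne_top_of_nonneg (by positivity) hVt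
  have hDR : D = ENNReal.ofReal R * b ^ (n : ℝ)⁻¹ := by
    rw [hD, hV, vol_ball n c hR, ENNReal.mul_rpow_of_nonneg _ _ (by positivity),
      ← ENNReal.rpow_mul, mul_inv_cancel₀ hn'.ne', ENNReal.rpow_one]
  have hκD : ∀ y ∈ ball c (2 * R), D + edist c y ≤ κ * D := fun y hy => by
    have h1 : edist c y ≤ 2 * ENNReal.ofReal R := by
      rw [edist_comm, edist_dist, show (2 : ℝ≥0∞) * ENNReal.ofReal R = ENNReal.ofReal (2 * R) by
        rw [ENNReal.ofReal_mul (by norm_num), ENNReal.ofReal_ofNat]]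
      exact ENNReal.ofReal_le_ofReal (mem_ball.1 hy).le
    have h2 : 2 * (b ^ (n : ℝ)⁻¹)⁻¹ * D = 2 * ENNReal.ofReal R := by
      rw [hDR, mul_assoc, mul_left_comm (b ^ (n : ℝ)⁻¹)⁻¹, ENNReal.inv_mul_cancel hb0 hbt, mul_one]
    rw [hκ, add_mul, one_mul, h2]
    gcongr
  have hκD0 : κ * D ≠ 0 := mul_ne_zero hκ0 hD0
  have hκDt : κ * D ≠ ∞ := ENNReal.mul_ne_top hκt hDt
  set G : Rn n → ℝ≥0∞ := fun y => (v i y)⁻¹ * (D + edist c y) ^ (-e) with hG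
  have hGm : Measurable G :=
    hv.inv.mul ((measurable_const.add measurable_edist_right).pow_const _)
  calc LpNormE (volume.restrict (ball c (2 * R))) (fun y => (v i y)⁻¹) (conjE (p i))
      ≤ LpNormE (volume.restrict (ball c (2 * R))) (fun y => (κ * D) ^ e * G y) (conjE (p i)) := by
        refine LpNormE_mono_ae ((ae_restrict_iff' measurableSet_ball).2
          (Filter.Eventually.of_forall fun y hy => ?_)) _
        have h1 : (1 : ℝ≥0∞) ≤ (κ * D) ^ e * (D + edist c y) ^ (-e) := by
          rw [ENNReal.rpow_neg, ← ENNReal.mul_inv_cancel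
            (a := (κ * D) ^ e) (by simp [ENNReal.rpow_eq_zero_iff, hκD0, hκDt])
            (ENNReal.rpow_ne_top_of_nonneg he hκDt)]
          exact mul_le_mul_right (ENNReal.inv_le_inv.2 (ENNReal.rpow_le_rpow (hκD y hy) he)) _
        calc (v i y)⁻¹ = (v i y)⁻¹ * 1 := (mul_one _).symm
          _ ≤ (v i y)⁻¹ * ((κ * D) ^ e * (D + edist c y) ^ (-e)) := mul_le_mul_right h1 _
          _ = _ := mul_left_comm _ _ _
    _ = (κ * D) ^ e * LpNormE (volume.restrict (ball c (2 * R))) G (conjE (p i)) :=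
        LpNormE_const_mul hGm _ _ (one_le_conjE hp)
    _ ≤ (κ * D) ^ e * LpNormE volume G (conjE (p i)) :=
        mul_le_mul_right (LpNormE_mono_measure Measure.restrict_le_self _ _) _
    _ = _ := by
        rw [ENNReal.mul_rpow_of_nonneg _ _ he, hD, ← ENNReal.rpow_mul, mul_comm (n : ℝ)⁻¹ e]
        rfl

/-- Lemma 4.1: local boundedness of the multilinear fractional integral `I_{α̃,m}`
for `α̃ = α + mδ`, applied to `f⃗ χ_{2B}`, under the `H_m(p⃗, α̃, δ̃)` condition. -/
theorem Ifrac_local_bound_prod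
    (n m : ℕ) (hn : 1 ≤ n) (hm : 1 ≤ m) (α δ δt : ℝ)
    (hα : 0 < α) (hαmn : α < (m : ℝ) * n)
    (hδ : 0 < δ) (hδα : δ < ((m : ℝ) * n - α) / m) (hδt : δt ≤ δ)
    (p : Fin m → ℝ≥0∞) (hp : ∀ i, 1 ≤ p i)
    (hpn : ∑ i, (p i)⁻¹ < ENNReal.ofReal ((α + m * δ) / (n : ℝ)))
    (β : Fin m → ℝ) (hβ : ∀ i, 0 < β i ∧ β i < n) (hβsum : ∑ i, β i = α + m * δ)
    (w : Rn n → ℝ≥0∞) (v : Fin m → Rn n → ℝ≥0∞)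
    (hw : IsWeight n w) (hv : ∀ i, IsWeight n (v i))
    (hH : MemHm n m δ δt β p w v)
    (hRH : ∀ i, 1 < p i → MemRH n (m : ℝ) fun x => (v i x)⁻¹ ^ conjR (p i)) :
    ∃ C : ℝ≥0∞, C ≠ ∞ ∧ ∀ (c : Rn n) (R : ℝ), 0 < R →
      ∀ f : Fin m → Rn n → ℝ, (∀ i, Measurable (f i)) →
        (∀ i, wLpNorm n (f i) (v i) (p i) ≠ ∞) →
        (∫⁻ x in ball c R,
            IfracE n m (α + m * δ)
              (fun i => (ball c (2 * R)).indicator fun z => ENNReal.ofReal |f i z|) x) ≤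
          C * (volume (ball c R) ^ (1 + δt / (n : ℝ)) /
              essSup w (volume.restrict (ball c R))) *
            ∏ i, wLpNorm n (f i) (v i) (p i) := by
  have hn0 : (0 : ℝ) < n := by exact_mod_cast hn
  have hm1 : (1 : ℝ) ≤ m := by exact_mod_cast hm
  have hm0 : (0 : ℝ) < m := by linarith
  set a := α + m * δ with ha
  have ha0 : 0 < a := by positivity
  have hamn : a < (m : ℝ) * n := by rw [lt_div_iff₀ hm0] at hδα; rw [ha]; linarith
  set S := ∑ i, conjInv (p i) with hS
  have hSlt : ((m : ℝ) * n - a) / n < S := by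
    have h1 : (∑ i, (p i)⁻¹).toReal < a / n := by
      have := (ENNReal.toReal_lt_toReal hpn.ne_top ENNReal.ofReal_ne_top).2 hpn
      rwa [ENNReal.toReal_ofReal (by positivity)] at this
    have h2 : ∀ i, (p i)⁻¹ ≠ ∞ := fun i =>
      ENNReal.inv_ne_top.2 (zero_lt_one.trans_le (hp i)).ne'
    rw [ENNReal.toReal_sum fun i _ => h2 i] at h1
    have h3 : S = m - ∑ i, ((p i)⁻¹).toReal := by
      simp [hS, conjInv, Finset.sum_sub_distrib]
    rw [h3, sub_div, mul_div_assoc, div_self hn0.ne']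
    linarith
  have hpos : 0 < ((m : ℝ) * n - a) / n := div_pos (by linarith) hn0
  have hS0 : 0 < S := hpos.trans hSlt
  -- the kernel exponent of the `i`-th variable is `θ n / p_i'`
  set θ := (((m : ℝ) * n - a) / n) / S with hθ
  have hθ0 : 0 ≤ θ := by positivity
  have hθ1 : θ < 1 := (div_lt_one hS0).2 hSlt
  have hθS : θ * S = ((m : ℝ) * n - a) / n := div_mul_cancel₀ _ hS0.ne'
  have hsum : ∑ i, θ * n * conjInv (p i) = (m : ℝ) * n - a := by
    rw [← Finset.mul_sum, ← hS, mul_right_comm, hθS, div_mul_cancel₀ _ hn0.ne']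
  have he : ∀ i, 0 ≤ (n : ℝ) - β i + δ / m := fun i => by
    have := (hβ i).2
    have : 0 < δ / m := by positivity
    linarith
  choose A hAt hA using fun i => factor_bound n m hn hm θ hθ0 hθ1 (p i) (hp i) (v i) (hv i) (hRH i)
  choose κ hκt hκ using fun i => local_le_HmFactor n m hn δ β p v i (hp i) (hv i).1 (he i)
  obtain ⟨CH, hCH, hH⟩ := hH
  refine ⟨(∏ i, A i) * ((∏ i, κ i) * CH), ENNReal.mul_ne_top
    (ENNReal.prod_ne_top fun i _ => hAt i) (ENNReal.mul_ne_top
    (ENNReal.prod_ne_top fun i _ => hκt i) hCH), fun c R hR f hf hfin => ?_⟩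
  set V := volume (ball c R) with hV
  have hV0 : V ≠ 0 := vol_ne_zero n c hR
  have hVt : V ≠ ∞ := vol_ne_top n c R
  set W := essSup w (volume.restrict (ball c R)) with hW
  set F : Fin m → ℝ≥0∞ := fun i => wLpNorm n (f i) (v i) (p i) with hF
  set N : Fin m → ℝ≥0∞ := fun i =>
    LpNormE (volume.restrict (ball c (2 * R))) (fun y => (v i y)⁻¹) (conjE (p i)) with hN
  set J : Fin m → Rn n → ℝ≥0∞ := fun i x => ∫⁻ y in ball c (2 * R),
    ENNReal.ofReal |f i y| * ((edist x y)⁻¹) ^ (θ * n * conjInv (p i)) with hJ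
  have hJm : ∀ i, Measurable (J i) := fun i => by
    have : Measurable (Function.uncurry fun x y : Rn n =>
        ENNReal.ofReal |f i y| * ((edist x y)⁻¹) ^ (θ * n * conjInv (p i))) := by
      simp only [Function.uncurry_def]
      exact ((hf i).abs.ennreal_ofReal.comp measurable_snd).mul
        ((measurable_edist.inv).pow_const _)
    exact this.lintegral_prod_right
  have hI : ∀ x, IfracE n m a
      (fun i => (ball c (2 * R)).indicator fun z => ENNReal.ofReal |f i z|) x ≤ ∏ i, J i x :=
    fun x => by
      refine (Ifrac_le_prod n m a _
        (fun i => mul_nonneg (by positivity) (conjInv_nonneg (hp i))) hsum _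
        (fun i => ((hf i).abs.ennreal_ofReal).indicator measurableSet_ball) x).trans (le_of_eq ?_)
      refine Finset.prod_congr rfl fun i _ => ?_
      simp only [hJ]
      rw [← lintegral_indicator measurableSet_ball]
      refine lintegral_congr fun y => ?_
      by_cases hy : y ∈ ball c (2 * R)
      · rw [indicator_of_mem hy, indicator_of_mem hy]
      · rw [indicator_of_notMem hy, indicator_of_notMem hy, zero_mul]
  -- Hölder in `x` with `m` equal exponents
  have hHol : ∫⁻ x in ball c R, ∏ i, J i x ≤
      ∏ i, (∫⁻ x in ball c R, J i x ^ (m : ℝ)) ^ (m : ℝ)⁻¹ := by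
    have := ENNReal.lintegral_prod_norm_pow_le (μ := volume.restrict (ball c R))
      (Finset.univ : Finset (Fin m)) (f := fun i x => J i x ^ (m : ℝ))
      (fun i _ => ((hJm i).pow_const _).aemeasurable) (p := fun _ => (m : ℝ)⁻¹)
      (by simp [hm0.ne']) (fun _ _ => by positivity)
    simpa only [← ENNReal.rpow_mul, mul_inv_cancel₀ hm0.ne', ENNReal.rpow_one] using this
  have hLHS : ∫⁻ x in ball c R, IfracE n m a
      (fun i => (ball c (2 * R)).indicator fun z => ENNReal.ofReal |f i z|) x ≤
      (∏ i, A i) * V ^ (1 - ((m : ℝ) * n - a) / n) * ((∏ i, F i) * ∏ i, N i) := by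
    refine ((lintegral_mono hI).trans hHol).trans ?_
    refine (Finset.prod_le_prod' fun i _ => hA i c R hR (f i) (hf i)).trans (le_of_eq ?_)
    rw [Finset.prod_mul_distrib, Finset.prod_mul_distrib, Finset.prod_mul_distrib,
      prod_rpow_eq _ _ hV0 hVt, Finset.sum_sub_distrib, ← Finset.mul_sum, ← hS, hθS]
    simp [hm0.ne', F, N]
  -- the `H_m` condition, localized to `2B`
  have hWN : W * ∏ i, N i ≤ (∏ i, κ i) * CH * V ^ (((m : ℝ) * n - a + δt) / n) := by
    have h1 : ∏ i, N i ≤ (∏ i, κ i) * V ^ (((m : ℝ) * n - a + δ) / n) *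
        ∏ i, HmFactor n m δ β p v c R i := by
      refine (Finset.prod_le_prod' fun i _ => hκ i c R hR).trans (le_of_eq ?_)
      rw [Finset.prod_mul_distrib, Finset.prod_mul_distrib, prod_rpow_eq _ _ hV0 hVt,
        ← Finset.sum_mul, Finset.sum_add_distrib, Finset.sum_sub_distrib, hβsum]
      simp only [Finset.sum_const, Finset.card_univ, Fintype.card_fin, nsmul_eq_mul]
      rw [mul_div_cancel₀ δ hm0.ne', div_eq_mul_inv _ (n : ℝ)]
    have h2 : W * ∏ i, HmFactor n m δ β p v c R i ≤ CH * V ^ ((δt - δ) / n) := by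
      have h := hH c R hR
      rw [HmLHS, ← hW, ← hV, div_eq_mul_inv, mul_right_comm, ← div_eq_mul_inv] at h
      rwa [ENNReal.div_le_iff (by simp [ENNReal.rpow_eq_zero_iff, hV0, hVt])
        (by simp [ENNReal.rpow_eq_top_iff, hV0, hVt])] at h
    calc W * ∏ i, N i ≤ W * ((∏ i, κ i) * V ^ (((m : ℝ) * n - a + δ) / n) *
        ∏ i, HmFactor n m δ β p v c R i) := mul_le_mul_right h1 _
      _ = (∏ i, κ i) * V ^ (((m : ℝ) * n - a + δ) / n) *
        (W * ∏ i, HmFactor n m δ β p v c R i) := by ring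
      _ ≤ (∏ i, κ i) * V ^ (((m : ℝ) * n - a + δ) / n) * (CH * V ^ ((δt - δ) / n)) :=
        mul_le_mul_right h2 _
      _ = _ := by
        rw [show ((m : ℝ) * n - a + δt) / n = ((m : ℝ) * n - a + δ) / n + (δt - δ) / n by ring,
          ENNReal.rpow_add _ _ hV0 hVt]
        ring
  have hVfin : ∀ e : ℝ, V ^ e ≠ ∞ := fun e => by simp [ENNReal.rpow_eq_top_iff, hV0, hVt]
  have hW0 : W ≠ 0 := by
    refine fun h => hV0 ?_
    have h1 : ∀ᵐ x ∂(volume.restrict (ball c R)), w x = 0 := ENNReal.essSup_eq_zero_iff.1 h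
    have h2 : ∀ᵐ x ∂(volume.restrict (ball c R)), 0 < w x ∧ w x < ∞ := ae_restrict_of_ae hw.2.1
    have h3 : ∀ᵐ x ∂(volume.restrict (ball c R)), False := by
      filter_upwards [h1, h2] with x hx hx'
      exact hx'.1.ne' hx
    simpa [ae_iff] using h3
  -- `W = ∞` would force some `N i` to vanish, but `v i` is finite almost everywhere
  have hN0 : ∏ i, N i ≠ 0 := Finset.prod_ne_zero_iff.2 fun i _ => by
    refine LpNormE_ne_zero ?_ (hv i).1.inv ?_ (one_le_conjE (hp i))
    · rw [Ne, Measure.restrict_eq_zero]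
      exact vol_ne_zero n c (by linarith)
    · filter_upwards [ae_restrict_of_ae (hv i).2.1] with x hx
      exact ENNReal.inv_ne_zero.2 hx.2.ne
  have hWt : W ≠ ∞ := fun h => by
    rw [h, ENNReal.top_mul hN0, top_le_iff] at hWN
    exact ENNReal.mul_ne_top (ENNReal.mul_ne_top
      (ENNReal.prod_ne_top fun i _ => hκt i) hCH) (hVfin _) hWN
  rw [← mul_div_assoc, ENNReal.mul_comm_div, ← mul_div_assoc,
    ENNReal.le_div_iff_mul_le (Or.inl hW0) (Or.inl hWt)]
  calc _ ≤ (∏ i, A i) * V ^ (1 - ((m : ℝ) * n - a) / n) * ((∏ i, F i) * ∏ i, N i) * W :=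
        mul_le_mul_left hLHS _
    _ = (∏ i, A i) * V ^ (1 - ((m : ℝ) * n - a) / n) * (∏ i, F i) * (W * ∏ i, N i) := by ring
    _ ≤ (∏ i, A i) * V ^ (1 - ((m : ℝ) * n - a) / n) * (∏ i, F i) *
        ((∏ i, κ i) * CH * V ^ (((m : ℝ) * n - a + δt) / n)) := mul_le_mul_right hWN _
    _ = _ := by
      rw [show 1 + δt / n = (1 - ((m : ℝ) * n - a) / n) + ((m : ℝ) * n - a + δt) / n by ring,
        ENNReal.rpow_add _ _ hV0 hVt]
      ring
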